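/- Let N ≥ 2 be an even integer. Then N is monomially irreducible if and only if N ∈ {2, 4, 6, 8, 12, 24}. -/

import Mathlib

namespace Monomial

/-- The elementary matrix `[[a, -1], [1, 0]]` over `ZMod N`. -/
def mat {N : ℕ} (a : ZMod N) : Matrix (Fin 2) (Fin 2) (ZMod N) := !![a, -1; 1, 0]

/-- `M [a₁, …, aₙ] = mat aₙ * ⋯ * mat a₁`. -/
def M {N : ℕ} (l : List (ZMod N)) : Matrix (Fin 2) (Fin 2) (ZMod N) :=
  (l.reverse.map mat).prod

/-- A tuple is a solution of (E_N) if the associated matrix is `±Id`. -/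
def IsSolution {N : ℕ} (l : List (ZMod N)) : Prop := M l = 1 ∨ M l = -1

/-- The sum `(a₁,…,aₙ) ⊕ (b₁,…,bₘ) = (a₁+bₘ, a₂,…,aₙ₋₁, aₙ+b₁, b₂,…,bₘ₋₁)`. -/
def osum {N : ℕ} (u v : List (ZMod N)) : List (ZMod N) :=
  (u.headI + v.getLastD 0) ::
    ((u.drop 1).dropLast ++ (u.getLastD 0 + v.headI) :: (v.drop 1).dropLast)

/-- Equivalence: `v` is a cyclic permutation of `u` or of the reversal of `u`. -/
def CyclicEquiv {N : ℕ} (u v : List (ZMod N)) : Prop :=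
  (∃ i, v = u.rotate i) ∨ (∃ i, v = u.reverse.rotate i)

/-- A tuple is reducible if, up to equivalence, it is a sum of an `m`-tuple (`m ≥ 3`)
with a solution of size `l ≥ 3`. -/
def Reducible {N : ℕ} (c : List (ZMod N)) : Prop :=
  ∃ a b : List (ZMod N), 3 ≤ a.length ∧ 3 ≤ b.length ∧ IsSolution b ∧
    CyclicEquiv c (osum a b)

/-- An irreducible solution: a solution which is not reducible (and `(0,0)` is
not considered irreducible). -/
def IrreducibleSol {N : ℕ} (c : List (ZMod N)) : Prop :=
  IsSolution c ∧ ¬ Reducible c ∧ c ≠ [0, 0]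

/-- The size of the `k`-monomial minimal solution of (E_N): the least `n > 0` such
that the constant `n`-tuple `(k, …, k)` is a solution. -/
noncomputable def monomialMinimalSize (N : ℕ) (k : ZMod N) : ℕ :=
  sInf {n | 0 < n ∧ IsSolution (List.replicate n k)}

/-- `N` is monomially irreducible if, for every `k ≠ 0`, the `k`-monomial minimal
solution of (E_N) is irreducible. -/
def MonomiallyIrreducible (N : ℕ) : Prop :=
  ∀ k : ZMod N, k ≠ 0 → IrreducibleSol (List.replicate (monomialMinimalSize N k) k)

/-- The continuant `Kₙ(x, …, x)` at a constant tuple: `K₀ = 1`, `K₁ = x`,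
`Kₙ₊₂ = x * Kₙ₊₁ - Kₙ`. -/
def K {N : ℕ} (x : ZMod N) : ℕ → ZMod N
  | 0 => 1
  | 1 => x
  | n + 2 => x * K x (n + 1) - K x n

/-!
A tuple `l` extends to a solution `(x, l, y)` exactly when its continuant is `±1`, so a constant
solution is reducible exactly when some continuant `K k (m + 1)` of intermediate index is `±1`.
By `K k (m + 1) ^ 2 - K k m * K k (m + 2) = 1`, the two neighbours of a continuant `±1` then have
product `0`, while a neighbour that *is* `0` means that the constant tuple of size one more than its
index is a solution. Hence the minimal solution for `k ≠ 0` is irreducible iff every continuant `±1`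
has a zero neighbour. This holds modulo a prime, fails at `K k 2` when `k ^ 2 = 0 ≠ 2 * k`, and
fails for `k ≡ 1 [MOD Q]`, `k ≡ 2 [MOD P]` when `N = Q * P` with `Q, P > 1` coprime and `P` prime
to `6`. Only primes and divisors of `24` remain, and the latter are checked directly.
-/

section Matrices

variable {N : ℕ}

lemma M_append (u v : List (ZMod N)) : M (u ++ v) = M v * M u := by
  simp [M]

lemma M_cons_append_singleton (x y : ZMod N) (l : List (ZMod N)) :
    M (x :: (l ++ [y])) = mat y * M l * mat x := by
  simp [M, mul_assoc]

lemma det_mat (a : ZMod N) : (mat a).det = 1 := by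
  simp [mat, Matrix.det_fin_two]

lemma det_M (l : List (ZMod N)) : (M l).det = 1 := by
  induction l with
  | nil => simp [M]
  | cons a l ih => rw [← List.singleton_append, M_append, Matrix.det_mul, ih]; simp [M, det_mat]

lemma isSolution_iff_apply {l : List (ZMod N)} :
    IsSolution l ↔ M l 0 1 = 0 ∧ M l 1 0 = 0 ∧ (M l 1 1 = 1 ∨ M l 1 1 = -1) := by
  constructor
  · rintro (h | h) <;> simp [h]
  · rintro ⟨h01, h10, h11⟩
    have hdet : M l 0 0 * M l 1 1 = 1 := by
      rw [← det_M l, Matrix.det_fin_two, h01, zero_mul, sub_zero]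
    refine h11.imp (fun h11 => ?_) (fun h11 => ?_)
    · have h00 : M l 0 0 = 1 := by rwa [h11, mul_one] at hdet
      rw [Matrix.eta_fin_two (M l), h00, h01, h10, h11, Matrix.one_fin_two]
    · have h00 : M l 0 0 = -1 := by rwa [h11, mul_neg_one, neg_eq_iff_eq_neg] at hdet
      rw [Matrix.eta_fin_two (M l), h00, h01, h10, h11, Matrix.one_fin_two]
      simp

lemma isSolution_cons_append_singleton_iff {x y : ZMod N} {l : List (ZMod N)} :
    IsSolution (x :: (l ++ [y])) ↔ M l 1 0 = y * M l 0 0 ∧ M l 0 1 = -(x * M l 0 0) ∧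
      (M l 0 0 = 1 ∨ M l 0 0 = -1) := by
  have entries : M (x :: (l ++ [y])) =
      !![y * (x * M l 0 0 + M l 0 1) - (x * M l 1 0 + M l 1 1), M l 1 0 - y * M l 0 0;
        M l 0 1 + x * M l 0 0, -M l 0 0] := by
    rw [M_cons_append_singleton, Matrix.eta_fin_two (M l), mat, mat, Matrix.mul_fin_two,
      Matrix.mul_fin_two]
    ext i j
    fin_cases i <;> fin_cases j <;> simp <;> ring
  rw [isSolution_iff_apply, entries]
  simp [sub_eq_zero, add_eq_zero_iff_eq_neg, neg_eq_iff_eq_neg, or_comm]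

lemma exists_isSolution_cons_append_singleton_iff {l : List (ZMod N)} :
    (∃ x y, IsSolution (x :: (l ++ [y]))) ↔ M l 0 0 = 1 ∨ M l 0 0 = -1 := by
  simp only [isSolution_cons_append_singleton_iff]
  refine ⟨fun ⟨_, _, _, _, h⟩ => h, fun h => ?_⟩
  have hsq : M l 0 0 * M l 0 0 = 1 := by rcases h with h | h <;> simp [h]
  exact ⟨-(M l 0 1 * M l 0 0), M l 1 0 * M l 0 0, by rw [mul_assoc, hsq, mul_one],
    by rw [neg_mul, neg_neg, mul_assoc, hsq, mul_one], h⟩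

end Matrices

section Continuants

variable {N : ℕ} (k : ZMod N)

lemma K_add_two (n : ℕ) : K k (n + 2) = k * K k (n + 1) - K k n := rfl

lemma M_replicate_succ (n : ℕ) : M (List.replicate (n + 1) k) =
    !![K k (n + 1), -K k n; K k n, K k (n + 1) - k * K k n] := by
  induction n with
  | zero => simp [M, mat, K]
  | succ n ih =>
    rw [List.replicate_succ', M_append, ih, K_add_two]
    ext i j
    fin_cases i <;> fin_cases j <;> simp [M, mat] <;> ring

lemma M_replicate_apply_zero_zero (n : ℕ) : M (List.replicate n k) 0 0 = K k n := by
  cases n with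
  | zero => simp [M, K]
  | succ n => simp [M_replicate_succ]

lemma K_succ_sq_sub (n : ℕ) : K k (n + 1) ^ 2 - K k n * K k (n + 2) = 1 := by
  have h := det_M (List.replicate (n + 1) k)
  rw [M_replicate_succ, Matrix.det_fin_two_of] at h
  rw [K_add_two]
  linear_combination h

lemma map_K {N' : ℕ} (f : ZMod N →+* ZMod N') (n : ℕ) : f (K k n) = K (f k) n := by
  induction n using Nat.twoStepInduction with
  | zero => simp [K]
  | one => simp [K]
  | more n ih₀ ih₁ => simp only [K_add_two, map_sub, map_mul, ih₀, ih₁]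

lemma K_one_periodic : Function.Periodic (K (1 : ZMod N)) 6 := by
  intro n
  simp only [K_add_two]
  ring

lemma K_two (n : ℕ) : K (2 : ZMod N) n = n + 1 := by
  induction n using Nat.twoStepInduction with
  | zero => simp [K]
  | one => norm_num [K]
  | more n ih₀ ih₁ => rw [K_add_two, ih₀, ih₁]; push_cast; ring

variable {k}

lemma isSolution_replicate_succ_iff {n : ℕ} : IsSolution (List.replicate (n + 1) k) ↔
    K k n = 0 ∧ (K k (n + 1) = 1 ∨ K k (n + 1) = -1) := by
  rw [isSolution_iff_apply, M_replicate_succ]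
  constructor
  · rintro ⟨-, h0, h1⟩
    exact ⟨h0, by simpa [show K k n = 0 from h0] using h1⟩
  · rintro ⟨h0, h1⟩
    simpa [h0] using h1

lemma periodic_or_antiperiodic_K {n : ℕ} (h : IsSolution (List.replicate n k)) :
    Function.Periodic (K k) n ∨ Function.Antiperiodic (K k) n := by
  have hadd (m : ℕ) : K k (m + n) = (M (List.replicate n k) * M (List.replicate m k)) 0 0 := by
    rw [← M_append, ← List.replicate_add, M_replicate_apply_zero_zero]
  refine h.imp (fun h m => ?_) (fun h m => ?_)
  · rw [hadd, h, one_mul, M_replicate_apply_zero_zero]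
  · rw [hadd, h, neg_one_mul, Matrix.neg_apply, M_replicate_apply_zero_zero]

end Continuants

section Reducibility

variable {N : ℕ} {k : ZMod N}

lemma cyclicEquiv_replicate_iff {n : ℕ} {v : List (ZMod N)} :
    CyclicEquiv (List.replicate n k) v ↔ v = List.replicate n k := by
  simp [CyclicEquiv]

lemma osum_cons_append_singleton (a b x y : ZMod N) (p q : List (ZMod N)) :
    osum (a :: (p ++ [b])) (x :: (q ++ [y])) = (a + y) :: (p ++ (b + x) :: q) := by
  have last (c d : ZMod N) (l : List (ZMod N)) : (c :: (l ++ [d])).getLastD 0 = d := by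
    rw [← List.cons_append, List.getLastD_concat]
  simp only [osum, last, List.headI_cons, List.drop_one, List.tail_cons, List.dropLast_concat]

lemma exists_eq_cons_append_singleton {α : Type*} {l : List α} (h : 2 ≤ l.length) :
    ∃ x p y, l = x :: (p ++ [y]) := by
  obtain ⟨x, t, rfl⟩ := List.exists_cons_of_length_pos (by omega : 0 < l.length)
  have ht : t ≠ [] := by rintro rfl; simp at h
  exact ⟨x, t.dropLast, t.getLast ht, by rw [List.dropLast_append_getLast]⟩

lemma reducible_replicate_iff {n : ℕ} : Reducible (List.replicate n k) ↔
    ∃ m, m + 4 ≤ n ∧ (K k (m + 1) = 1 ∨ K k (m + 1) = -1) := by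
  simp only [Reducible, cyclicEquiv_replicate_iff, ← M_replicate_apply_zero_zero,
    ← exists_isSolution_cons_append_singleton_iff]
  constructor
  · rintro ⟨u, v, hu, hv, hsol, h⟩
    obtain ⟨a, p, b, rfl⟩ := exists_eq_cons_append_singleton (by omega : 2 ≤ u.length)
    obtain ⟨x, q, y, rfl⟩ := exists_eq_cons_append_singleton (by omega : 2 ≤ v.length)
    rw [osum_cons_append_singleton, List.eq_replicate_iff] at h
    obtain ⟨hlen, hmem⟩ := h
    have hq : q = List.replicate q.length k :=
      List.eq_replicate_iff.2 ⟨rfl, fun z hz => hmem z (by simp [hz])⟩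
    simp only [List.length_cons, List.length_append, List.length_nil] at hu hv hlen
    refine ⟨q.length - 1, by omega, x, y, ?_⟩
    rwa [Nat.sub_add_cancel (by omega), ← hq]
  · rintro ⟨m, hm, x, y, hsol⟩
    obtain ⟨r, rfl⟩ := Nat.exists_eq_add_of_le' hm
    refine ⟨(k - y) :: (List.replicate (r + 1) k ++ [k - x]), _, by simp, by simp, hsol, ?_⟩
    rw [osum_cons_append_singleton, sub_add_cancel, sub_add_cancel, List.eq_replicate_iff]
    refine ⟨?_, fun z hz => ?_⟩
    · simp only [List.length_cons, List.length_append, List.length_replicate]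
      omega
    · simp only [List.mem_cons, List.mem_append, List.mem_replicate] at hz
      tauto

end Reducibility

section Criterion

variable {N : ℕ} {k : ZMod N}

/-- If the continuant with index `m + 1` is `±1`, then one of its two neighbours vanishes. The index
is shifted because `K k 0 = 1` is always preceded by the zero continuant of index `-1`. -/
def UnitHasZeroNeighbor (k : ZMod N) (m : ℕ) : Prop :=
  K k (m + 1) = 1 ∨ K k (m + 1) = -1 → K k m = 0 ∨ K k (m + 2) = 0

instance (k : ZMod N) : DecidablePred (UnitHasZeroNeighbor k) :=
  fun _ => inferInstanceAs (Decidable (_ → _))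

lemma periodic_unitHasZeroNeighbor {n : ℕ} (h : IsSolution (List.replicate n k)) :
    Function.Periodic (UnitHasZeroNeighbor k) n := by
  intro m
  have shift (i : ℕ) : m + n + i = m + i + n := by omega
  simp only [UnitHasZeroNeighbor, shift, eq_iff_iff]
  rcases periodic_or_antiperiodic_K h with hK | hK
  · simp only [hK _]
  · simp only [hK _, neg_eq_zero, neg_inj, neg_eq_iff_eq_neg (b := (1 : ZMod N))]
    tauto

lemma forall_unitHasZeroNeighbor_of_lt {n : ℕ} (hn : 0 < n)
    (h : IsSolution (List.replicate n k)) (hlt : ∀ m < n, UnitHasZeroNeighbor k m) (m : ℕ) :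
    UnitHasZeroNeighbor k m := by
  rw [← (periodic_unitHasZeroNeighbor h).map_mod_nat m]
  exact hlt _ (Nat.mod_lt m hn)

lemma exists_pos_isSolution_replicate [NeZero N] (k : ZMod N) :
    ∃ n, 0 < n ∧ IsSolution (List.replicate n k) := by
  obtain ⟨u, hu⟩ : IsUnit (mat k) := by
    rw [Matrix.isUnit_iff_isUnit_det, det_mat]
    exact isUnit_one
  obtain ⟨n, hn, hpow⟩ := isOfFinOrder_iff_pow_eq_one.1 (isOfFinOrder_of_finite u)
  refine ⟨n, hn, Or.inl ?_⟩
  simp [M, ← hu, ← Units.val_pow_eq_pow_val, hpow]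

lemma monomialMinimalSize_pos [NeZero N] (k : ZMod N) : 0 < monomialMinimalSize N k :=
  (Nat.sInf_mem (exists_pos_isSolution_replicate k)).1

lemma isSolution_replicate_monomialMinimalSize [NeZero N] (k : ZMod N) :
    IsSolution (List.replicate (monomialMinimalSize N k) k) :=
  (Nat.sInf_mem (exists_pos_isSolution_replicate k)).2

lemma monomialMinimalSize_le {n : ℕ} (h : IsSolution (List.replicate (n + 1) k)) :
    monomialMinimalSize N k ≤ n + 1 :=
  Nat.sInf_le ⟨n.succ_pos, h⟩

lemma not_reducible_replicate_monomialMinimalSize (h : ∀ m, UnitHasZeroNeighbor k m) :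
    ¬ Reducible (List.replicate (monomialMinimalSize N k) k) := by
  rw [reducible_replicate_iff]
  rintro ⟨m, hm, hunit⟩
  rcases h m hunit with hzero | hzero
  · have := monomialMinimalSize_le (isSolution_replicate_succ_iff.2 ⟨hzero, hunit⟩)
    omega
  · have hunit' : K k (m + 3) = 1 ∨ K k (m + 3) = -1 := by
      rw [K_add_two, hzero, mul_zero, zero_sub, neg_inj, neg_eq_iff_eq_neg]
      exact hunit.symm
    have := monomialMinimalSize_le (isSolution_replicate_succ_iff.2 ⟨hzero, hunit'⟩)
    omega

lemma unitHasZeroNeighbor_of_not_reducible [Nontrivial (ZMod N)] {n : ℕ} (hn : 0 < n)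
    (hsol : IsSolution (List.replicate n k)) (hirr : ¬ Reducible (List.replicate n k)) (m : ℕ) :
    UnitHasZeroNeighbor k m := by
  refine forall_unitHasZeroNeighbor_of_lt hn hsol (fun m hm hunit => ?_) m
  obtain ⟨n, rfl⟩ : ∃ i, n = i + 1 := ⟨n - 1, by omega⟩
  have hzero : K k n = 0 := (isSolution_replicate_succ_iff.1 hsol).1
  have hlarge : n + 1 < m + 4 := by
    by_contra! hle
    exact hirr (reducible_replicate_iff.2 ⟨m, hle, hunit⟩)
  obtain rfl | rfl | rfl : n = m ∨ n = m + 1 ∨ n = m + 2 := by omega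
  · exact Or.inl hzero
  · simp [hzero] at hunit
  · exact Or.inr hzero

lemma irreducibleSol_replicate_monomialMinimalSize_iff [NeZero N] (hk : k ≠ 0) :
    IrreducibleSol (List.replicate (monomialMinimalSize N k) k) ↔
      ∀ m, UnitHasZeroNeighbor k m := by
  have : Nontrivial (ZMod N) := nontrivial_of_ne k 0 hk
  have hsol := isSolution_replicate_monomialMinimalSize k
  refine ⟨fun h => unitHasZeroNeighbor_of_not_reducible (monomialMinimalSize_pos k) hsol h.2.1,
    fun h => ⟨hsol, not_reducible_replicate_monomialMinimalSize h, fun h00 => hk ?_⟩⟩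
  have hmem : (0 : ZMod N) ∈ List.replicate (monomialMinimalSize N k) k := by simp [h00]
  exact (List.eq_of_mem_replicate hmem).symm

lemma monomiallyIrreducible_iff_forall_unitHasZeroNeighbor [NeZero N] :
    MonomiallyIrreducible N ↔ ∀ k : ZMod N, k ≠ 0 → ∀ m, UnitHasZeroNeighbor k m :=
  forall₂_congr fun _ hk => irreducibleSol_replicate_monomialMinimalSize_iff hk

end Criterion

section Irreducible

variable {N : ℕ}

lemma monomiallyIrreducible_of_prime (hN : N.Prime) : MonomiallyIrreducible N := by
  have : Fact N.Prime := ⟨hN⟩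
  refine monomiallyIrreducible_iff_forall_unitHasZeroNeighbor.2 fun k _ m hunit => ?_
  have hsq : K k (m + 1) ^ 2 = 1 := sq_eq_one_iff.2 hunit
  have hdet := K_succ_sq_sub k m
  rw [hsq, sub_eq_self] at hdet
  exact mul_eq_zero.1 hdet

lemma monomiallyIrreducible_of_forall_lt [NeZero N] {n : ℕ}
    (hsol : ∀ k : ZMod N, K k n = 0 ∧ K k (n + 1) = 1)
    (hlt : ∀ k : ZMod N, k ≠ 0 → ∀ m < n + 1, UnitHasZeroNeighbor k m) :
    MonomiallyIrreducible N :=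
  monomiallyIrreducible_iff_forall_unitHasZeroNeighbor.2 fun k hk =>
    forall_unitHasZeroNeighbor_of_lt n.succ_pos
      (isSolution_replicate_succ_iff.2 ⟨(hsol k).1, Or.inl (hsol k).2⟩) (hlt k hk)

lemma monomiallyIrreducible_of_mem (hN : N ∈ ({4, 6, 8, 12, 24} : Set ℕ)) :
    MonomiallyIrreducible N := by
  rcases hN with rfl | rfl | rfl | rfl | rfl <;>
    exact monomiallyIrreducible_of_forall_lt (n := 23) (by decide +kernel) (by decide +kernel)

end Irreducible

section NotIrreducible

variable {N : ℕ}

lemma not_unitHasZeroNeighbor_one {k : ZMod N} (hsq : k ^ 2 = 0) (h2 : 2 * k ≠ 0) :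
    ¬ UnitHasZeroNeighbor k 1 := by
  have hK₂ : K k 2 = -1 := by simp only [K]; linear_combination hsq
  have hK₃ : K k 3 = -(2 * k) := by simp only [K]; linear_combination k * hsq
  intro h
  rcases h (Or.inr hK₂) with h | h
  · exact h2 (by rw [show k = 0 from h, mul_zero])
  · exact h2 (neg_eq_zero.1 (hK₃.symm.trans h))

lemma not_monomiallyIrreducible_of_sq_dvd [NeZero N] {d : ℕ} (hd : 3 ≤ d) (hdvd : d ^ 2 ∣ N) :
    ¬ MonomiallyIrreducible N := by
  obtain ⟨c, rfl⟩ := hdvd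
  have hc : 0 < c := Nat.pos_of_ne_zero (right_ne_zero_of_mul (NeZero.ne (d ^ 2 * c)))
  set k : ZMod (d ^ 2 * c) := ((d * c : ℕ) : ZMod (d ^ 2 * c)) with hk
  have hsq : k ^ 2 = 0 := by
    rw [hk, ← Nat.cast_pow, ZMod.natCast_eq_zero_iff]
    exact ⟨c, by ring⟩
  have h2 : 2 * k ≠ 0 := by
    intro h
    have hdvd : d ^ 2 * c ∣ 2 * (d * c) := by
      rwa [← ZMod.natCast_eq_zero_iff, Nat.cast_mul, Nat.cast_ofNat]
    have hle : d * (d * c) ≤ 2 * (d * c) := by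
      linarith [Nat.le_of_dvd (by positivity) hdvd, (by ring : d * (d * c) = d ^ 2 * c)]
    have := Nat.le_of_mul_le_mul_right hle (by positivity)
    omega
  rw [monomiallyIrreducible_iff_forall_unitHasZeroNeighbor]
  exact fun h => not_unitHasZeroNeighbor_one hsq h2 (h k (right_ne_zero_of_mul h2) 1)

lemma chineseRemainder_K {Q P : ℕ} (hc : Q.Coprime P) (k : ZMod (Q * P)) (n : ℕ) :
    ZMod.chineseRemainder hc (K k n) =
      (K (ZMod.chineseRemainder hc k).1 n, K (ZMod.chineseRemainder hc k).2 n) :=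
  let e : ZMod (Q * P) →+* ZMod Q × ZMod P := ZMod.chineseRemainder hc
  Prod.ext (map_K k ((RingHom.fst _ _).comp e) n) (map_K k ((RingHom.snd _ _).comp e) n)

lemma chineseRemainder_K_of_eq_one_two {Q P : ℕ} {hc : Q.Coprime P} {k : ZMod (Q * P)}
    (hk : ZMod.chineseRemainder hc k = (1, 2)) (n : ℕ) :
    ZMod.chineseRemainder hc (K k n) = (K 1 (n % 6), (n : ZMod P) + 1) := by
  rw [chineseRemainder_K, hk, K_two, K_one_periodic.map_mod_nat]

lemma K_eq_zero_iff_of_eq_one_two {Q P : ℕ} {hc : Q.Coprime P} {k : ZMod (Q * P)}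
    (hk : ZMod.chineseRemainder hc k = (1, 2)) {n : ℕ} :
    K k n = 0 ↔ K (1 : ZMod Q) (n % 6) = 0 ∧ (n : ZMod P) + 1 = 0 := by
  rw [← EmbeddingLike.map_eq_zero_iff (f := ZMod.chineseRemainder hc),
    chineseRemainder_K_of_eq_one_two hk, Prod.mk_eq_zero]

lemma two_ne_zero_of_two_lt {P : ℕ} (hP : 2 < P) : (2 : ZMod P) ≠ 0 := by
  rw [← Nat.cast_ofNat, Ne, ZMod.natCast_eq_zero_iff]
  exact Nat.not_dvd_of_pos_of_lt two_pos hP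

lemma not_unitHasZeroNeighbor_of_mod_six_eq_zero {Q m : ℕ} (hQ : 1 < Q) (hm : 0 < m)
    (hm6 : m % 6 = 0) {hc : Q.Coprime (m + 1)} {k : ZMod (Q * (m + 1))}
    (hk : ZMod.chineseRemainder hc k = (1, 2)) : ¬ UnitHasZeroNeighbor k m := by
  have : Fact (1 < Q) := ⟨hQ⟩
  have hP : (m : ZMod (m + 1)) + 1 = 0 := mod_cast ZMod.natCast_self (m + 1)
  have hunit : K k (m + 1) = 1 := by
    refine (ZMod.chineseRemainder hc).injective ((chineseRemainder_K_of_eq_one_two hk _).trans ?_)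
    simp [Nat.add_mod, hm6, K]
  intro h
  rcases h (Or.inl hunit) with hzero | hzero
  · simpa [hm6, K] using ((K_eq_zero_iff_of_eq_one_two hk).1 hzero).1
  · have hsnd := ((K_eq_zero_iff_of_eq_one_two hk).1 hzero).2
    push_cast at hsnd
    have htwo : (2 : ZMod (m + 1)) = 0 := by linear_combination hsnd - hP
    exact two_ne_zero_of_two_lt (by omega) htwo

lemma not_unitHasZeroNeighbor_of_mod_six_eq_two {Q m : ℕ} (hQ : 1 < Q) (hm6 : m % 6 = 2)
    {hc : Q.Coprime (m + 3)} {k : ZMod (Q * (m + 3))}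
    (hk : ZMod.chineseRemainder hc k = (1, 2)) : ¬ UnitHasZeroNeighbor k m := by
  have : Fact (1 < Q) := ⟨hQ⟩
  have hP : (m : ZMod (m + 3)) + 3 = 0 := mod_cast ZMod.natCast_self (m + 3)
  have hunit : K k (m + 1) = -1 := by
    refine (ZMod.chineseRemainder hc).injective ((chineseRemainder_K_of_eq_one_two hk _).trans ?_)
    have hfst : K (1 : ZMod Q) ((m + 1) % 6) = -1 := by simp [Nat.add_mod, hm6, K]
    have hsnd : ((m + 1 : ℕ) : ZMod (m + 3)) + 1 = -1 := by push_cast; linear_combination hP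
    rw [hfst, hsnd, map_neg, map_one]
    rfl
  intro h
  rcases h (Or.inr hunit) with hzero | hzero
  · have hsnd := ((K_eq_zero_iff_of_eq_one_two hk).1 hzero).2
    have htwo : (2 : ZMod (m + 3)) = 0 := by linear_combination hP - hsnd
    exact two_ne_zero_of_two_lt (by omega) htwo
  · simpa [Nat.add_mod, hm6, K] using ((K_eq_zero_iff_of_eq_one_two hk).1 hzero).1

lemma not_monomiallyIrreducible_mul {Q P : ℕ} (hQ : 1 < Q) (hP : 1 < P) (hc : Q.Coprime P)
    (h6 : P.Coprime 6) : ¬ MonomiallyIrreducible (Q * P) := by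
  have : Fact (1 < Q) := ⟨hQ⟩
  have : NeZero (Q * P) := ⟨by positivity⟩
  obtain ⟨k, hk⟩ := (ZMod.chineseRemainder hc).surjective (1, 2)
  have hk0 : k ≠ 0 := by
    rintro rfl
    simpa using congrArg Prod.fst hk
  rw [monomiallyIrreducible_iff_forall_unitHasZeroNeighbor]
  intro h
  have hmod : P % 6 = 1 ∨ P % 6 = 5 :=
    (by decide : ∀ r < 6, r.Coprime 6 → r = 1 ∨ r = 5) (P % 6) (Nat.mod_lt P (by norm_num))
      ((Nat.mod_modEq P 6).gcd_eq.trans h6)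
  rcases hmod with hmod | hmod
  · obtain ⟨m, rfl⟩ := Nat.exists_eq_add_of_le' (by omega : 1 ≤ P)
    exact not_unitHasZeroNeighbor_of_mod_six_eq_zero hQ (by omega) (by omega) hk (h k hk0 m)
  · obtain ⟨m, rfl⟩ := Nat.exists_eq_add_of_le' (by omega : 3 ≤ P)
    exact not_unitHasZeroNeighbor_of_mod_six_eq_two hQ (by omega) hk (h k hk0 m)

lemma prime_of_monomiallyIrreducible [NeZero N] (h : MonomiallyIrreducible N) {p : ℕ}
    (hp : p.Prime) (h3 : 3 < p) (hdvd : p ∣ N) : N.Prime := by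
  obtain ⟨Q, rfl⟩ := hdvd
  have hpQ : p.Coprime Q := by
    refine (Nat.Prime.coprime_iff_not_dvd hp).2 fun hQ => ?_
    exact not_monomiallyIrreducible_of_sq_dvd h3.le (sq p ▸ mul_dvd_mul_left p hQ) h
  have hp6 : p.Coprime 6 := by
    have h2 : p.Coprime 2 := (Nat.coprime_primes hp Nat.prime_two).2 (by omega)
    have h3 : p.Coprime 3 := (Nat.coprime_primes hp Nat.prime_three).2 (by omega)
    exact h2.mul_right h3
  have hQ : Q ≠ 0 := right_ne_zero_of_mul (NeZero.ne (p * Q))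
  obtain rfl : Q = 1 := by
    by_contra hQ1
    exact not_monomiallyIrreducible_mul (by omega) hp.one_lt hpQ.symm hp6 (mul_comm p Q ▸ h)
  rwa [mul_one]

end NotIrreducible

lemma dvd_twentyFour_of_prime_le_three {n : ℕ} (hp : ∀ p, p.Prime → p ∣ n → p ≤ 3)
    (h16 : ¬ 16 ∣ n) (h9 : ¬ 9 ∣ n) : n ∣ 24 := by
  rw [Nat.dvd_iff_prime_pow_dvd_dvd]
  intro p e hprime hdvd
  rcases e.eq_zero_or_pos with rfl | he
  · simp
  have hle : p ≤ 3 := hp p hprime ((dvd_pow_self p he.ne').trans hdvd)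
  have hge : 2 ≤ p := hprime.two_le
  interval_cases p
  · have : e ≤ 3 := by
      by_contra! hlt
      exact h16 ((pow_dvd_pow 2 hlt).trans hdvd)
    exact (pow_dvd_pow 2 this).trans (by norm_num)
  · have : e ≤ 1 := by
      by_contra! hlt
      exact h9 ((pow_dvd_pow 3 hlt).trans hdvd)
    exact (pow_dvd_pow 3 this).trans (by norm_num)

theorem stmt1_general (N : ℕ) (hN : 2 ≤ N) :
    MonomiallyIrreducible N ↔ N.Prime ∨ N ∈ ({4, 6, 8, 12, 24} : Set ℕ) := by
  have : NeZero N := ⟨by omega⟩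
  refine ⟨fun h => or_iff_not_imp_left.2 fun hprime => ?_,
    fun h => h.elim monomiallyIrreducible_of_prime monomiallyIrreducible_of_mem⟩
  have hdvd : N ∣ 24 := by
    refine dvd_twentyFour_of_prime_le_three (fun p hp hpN => ?_) (fun h16 => ?_) (fun h9 => ?_)
    · by_contra! h3
      exact hprime (prime_of_monomiallyIrreducible h hp h3 hpN)
    · exact not_monomiallyIrreducible_of_sq_dvd (d := 4) (by norm_num) h16 h
    · exact not_monomiallyIrreducible_of_sq_dvd (d := 3) (by norm_num) h9 h
  have hmem : N ∈ Nat.divisors 24 := Nat.mem_divisors.2 ⟨hdvd, by norm_num⟩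
  rw [show Nat.divisors 24 = {1, 2, 3, 4, 6, 8, 12, 24} by decide] at hmem
  have h2 : N ≠ 2 := fun h => hprime (h ▸ Nat.prime_two)
  have h3 : N ≠ 3 := fun h => hprime (h ▸ Nat.prime_three)
  simp only [Finset.mem_insert, Finset.mem_singleton, Set.mem_insert_iff,
    Set.mem_singleton_iff] at hmem ⊢
  omega

theorem stmt1 (N : ℕ) (hN : 2 ≤ N) (he : Even N) :
    MonomiallyIrreducible N ↔ N ∈ ({2, 4, 6, 8, 12, 24} : Set ℕ) := by
  have hprime : N.Prime ↔ N = 2 := ⟨fun h => h.even_iff.1 he, fun h => h ▸ Nat.prime_two⟩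
  exact (stmt1_general N hN).trans (or_congr_left hprime)

end Monomial
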